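/- Fix an integer N ≥ 1 and scalars D_0, …, D_{N−1} ∈ K. With the modes and conventions of the context (untwisted bosons b_k, k ∈ ℤ, with b_0 = √ℏ ∂_{x^0}, and Z₂-twisted Ramond fermions ψ_n, n ∈ ℤ, with zero mode ψ_0 = (1/√(2ℏ))(θ^0 + ℏ ∂_{θ^0})), define for i ∈ ℤ_{≥0}: H_i = ℏ ∂_{x^i} + (ℏ/2) Σ_{j∈ℤ} :b_j b_{i+N−1−j}: + (ℏ/2) Σ_{j∈ℤ} (j + (i+N−1)/2) :ψ_{−j} ψ_{i+N−1+j}: + ℏ D_i [i ≤ N−1], and for integers j ≥ 1: F_j = ℏ ∂_{θ^j} + ℏ Σ_{k∈ℤ} b_{j+N−1−k} ψ_k. Then these operators form a representation of a subalgebra of the N=1 super Virasoro algebra in the Ramond sector: for all i, i′ ∈ ℤ_{≥0} and all integers j, j′ ≥ 1, [H_i, H_{i′}] = ℏ (i−i′) H_{i+i′+N−1}, [H_i, F_j] = ℏ ((i−N+1)/2 − j) F_{i+j+N−1}, and {F_j, F_{j′}} = 2ℏ H_{j+j′+N−1}. (This is a super quantum Airy structure with one extra fermionic variable θ^0.) 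-/

import Mathlib

/-!
Statement 9: the μ-twisted free boson–fermion representation of a subalgebra of the N=1
super Virasoro algebra in the Ramond sector. Untwisted bosons `b_k`, `k ∈ ℤ`, act on
`P = K[t,t⁻¹][x⁰,x¹,…]` (with `ℏ = t²`, `√ℏ = t`), Z₂-twisted Ramond fermions `ψ_n`,
`n ∈ ℤ`, with zero mode `ψ₀ = (1/√(2ℏ))(θ⁰ + ℏ∂_{θ⁰})`, act on `Λ(θ⁰,θ¹,…)`.
The resulting super quantum Airy structure has one extra fermionic variable `θ⁰`.
-/

set_option synthInstance.maxHeartbeats 1000000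
set_option maxHeartbeats 1000000

noncomputable section
open TensorProduct

variable (K : Type) [Field K] [CharZero K] (s2 : K)

/-- `R = K[t,t⁻¹]`, with `ℏ = t²`, `√ℏ = t`. -/
abbrev R := LaurentPolynomial K
/-- `ℏ = t² ∈ R`. -/
def hb : R K := LaurentPolynomial.T 2
/-- A scalar `c : K` viewed in `R`. -/
def cs (c : K) : R K := LaurentPolynomial.C c
/-- The even part `P = R[x⁰,x¹,x²,…]`. -/
abbrev Pev := MvPolynomial ℕ (R K)
/-- The odd part `Λ(θ⁰,θ¹,…)`; generators are indexed by `ℕ`. -/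
abbrev Podd := ExteriorAlgebra (R K) (ℕ →₀ R K)
/-- The full carrier `S = P ⊗_R Λ`. -/
abbrev SuperSpace := Pev K ⊗[R K] Podd K

/-- `∂_{x^a}`, acting through the polynomial factor. -/
def dX (a : ℕ) : SuperSpace K → SuperSpace K :=
  LinearMap.rTensor (Podd K) (MvPolynomial.pderiv a).toLinearMap

/-- Multiplication by `x^a`, acting through the polynomial factor. -/
def mX (a : ℕ) : SuperSpace K → SuperSpace K :=
  LinearMap.rTensor (Podd K) (LinearMap.mulLeft (R K) (MvPolynomial.X a))

/-- `∂_{θ^a}` (interior product with the dual basis vector), acting through the odd factor. -/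
def dT (a : ℕ) : SuperSpace K → SuperSpace K :=
  LinearMap.lTensor (Pev K) (CliffordAlgebra.contractLeft (Finsupp.lapply a))

/-- Left multiplication by `θ^a`, acting through the odd factor. -/
def mT (a : ℕ) : SuperSpace K → SuperSpace K :=
  LinearMap.lTensor (Pev K)
    (LinearMap.mulLeft (R K) (ExteriorAlgebra.ι (R K) (Finsupp.single a 1)))

/-- `∂_{x^a}` for `a ∈ ℤ`, vanishing for `a < 0`. -/
def dXi (a : ℤ) : SuperSpace K → SuperSpace K :=
  fun v => if 0 ≤ a then dX K a.toNat v else 0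

/-- `∂_{θ^a}` for `a ∈ ℤ`, vanishing for `a < 1` (used only for the linear terms of `F_j`). -/
def dTi (a : ℤ) : SuperSpace K → SuperSpace K :=
  fun v => if 1 ≤ a then dT K a.toNat v else 0

/-- The untwisted boson mode `b_k`: `b_k = √ℏ ∂_{x^k}` for `k ≥ 0`,
`b_{−k} = (k/√ℏ) x^k` for `k ≥ 1`. -/
def bos (k : ℤ) : SuperSpace K → SuperSpace K :=
  if 0 ≤ k then fun v => (LaurentPolynomial.T 1 : R K) • dX K k.toNat v
  else fun v => (((-k : ℤ) : R K) * LaurentPolynomial.T (-1)) • mX K (-k).toNat v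

/-- The Z₂-twisted (Ramond) fermion mode `ψ_n`: `ψ_n = √ℏ ∂_{θ^n}` and
`ψ_{−n} = (1/√ℏ) θ^n` for `n ≥ 1`, and `ψ₀ = (1/√(2ℏ))(θ⁰ + ℏ∂_{θ⁰})`. -/
def fer (n : ℤ) : SuperSpace K → SuperSpace K :=
  if 1 ≤ n then fun v => (LaurentPolynomial.T 1 : R K) • dT K n.toNat v
  else if n = 0 then fun v =>
    (cs K s2⁻¹ * LaurentPolynomial.T (-1)) • (mT K 0 v + hb K • dT K 0 v)
  else fun v => (LaurentPolynomial.T (-1) : R K) • mT K (-n).toNat v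

/-- The normally ordered boson bilinear `:b_α b_β:`. -/
def nb (α β : ℤ) : SuperSpace K → SuperSpace K :=
  if α ≤ β then fun v => bos K α (bos K β v) else fun v => bos K β (bos K α v)

/-- The normally ordered fermion bilinear `:ψ_α ψ_β:`. -/
def nf (α β : ℤ) : SuperSpace K → SuperSpace K :=
  if α ≤ β then fun v => fer K s2 α (fer K s2 β v)
  else fun v => -(fer K s2 β (fer K s2 α v))

/-- `H_i = ℏ ∂_{x^i} + (ℏ/2) Σ_{j∈ℤ} :b_j b_{i+N−1−j}:
        + (ℏ/2) Σ_{j∈ℤ} (j + (i+N−1)/2) :ψ_{−j} ψ_{i+N−1+j}: + ℏ D_i [i ≤ N−1]`. -/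
def Hop (N : ℤ) (D : ℤ → K) (i : ℤ) : SuperSpace K → SuperSpace K := fun v =>
  hb K • dXi K i v
    + (cs K (2 : K)⁻¹ * hb K) • (∑ᶠ j : ℤ, nb K j (i + N - 1 - j) v)
    + (cs K (2 : K)⁻¹ * hb K) •
        (∑ᶠ j : ℤ, (((2 * j + i + N - 1 : ℤ) : R K) * cs K (2 : K)⁻¹) •
          nf K s2 (-j) (i + N - 1 + j) v)
    + (if i ≤ N - 1 then (hb K * cs K (D i)) • v else 0)

/-- `F_j = ℏ ∂_{θ^j} + ℏ Σ_{k∈ℤ} b_{j+N−1−k} ψ_k`. -/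
def Fop (N : ℤ) (j : ℤ) : SuperSpace K → SuperSpace K := fun v =>
  hb K • dTi K j v + hb K • (∑ᶠ k : ℤ, bos K (j + N - 1 - k) (fer K s2 k v))

/-!
The creation operators `x^a`, `θ^a` generate the Fock space from the vacuum `1 ⊗ 1`, so an operator
is determined by its value on the vacuum and its supercommutators with these generators. The modes
`L_n = ½ Σ :b b: + ½ Σ (j + n/2) :ψ ψ:` and `G_n = Σ b ψ` act on the generators linearly: their
supercommutators with them are multiples of single modes `b_m`, `ψ_m`. The super Jacobi identity
therefore gives the super Virasoro relations against every generator. For nonnegative indices both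
sides also kill the vacuum, so no central term appears. The operators of the theorem are
`H_i = ℏ (ℏ^{-1/2} b_i + L_{i+N-1} + D_i)` and `F_j = ℏ (ℏ^{-1/2} ψ_j + G_{j+N-1})`, and the
constants `D_i` never contribute: the right-hand sides only involve `H_m` with `m ≥ N`, apart from
a zero multiple of `H_{N-1}` at `i = i' = 0`.
-/

section SuperBracket

variable {A B C : Type*} [CommRing A] [Ring B] [Algebra A B] [Ring C]

/-- The supercommutator `xy - ε yx`. For homogeneous `x`, `y` the sign `ε` is `-1` if both are odd
and `1` otherwise; it is a parameter because the parity of an operator is not recorded. -/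
def superBracket (ε : ℤˣ) (x y : B) : B := x * y - ε • (y * x)

theorem superBracket_one_eq_sub (x y : B) : superBracket 1 x y = x * y - y * x := by
  rw [superBracket, one_smul]

theorem superBracket_neg_one_eq_add (x y : B) : superBracket (-1) x y = x * y + y * x := by
  rw [superBracket, Units.neg_smul, one_smul, sub_neg_eq_add]

theorem superBracket_swap (ε : ℤˣ) (x y : B) : superBracket ε x y = -(ε • superBracket ε y x) := by
  simp only [superBracket, smul_sub, smul_smul, Int.units_mul_self, one_smul, neg_sub]

theorem superBracket_add_left (ε : ℤˣ) (x y z : B) :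
    superBracket ε (x + y) z = superBracket ε x z + superBracket ε y z := by
  simp only [superBracket, add_mul, mul_add, smul_add, add_sub_add_comm]

theorem superBracket_add_right (ε : ℤˣ) (x y z : B) :
    superBracket ε x (y + z) = superBracket ε x y + superBracket ε x z := by
  simp only [superBracket, add_mul, mul_add, smul_add, add_sub_add_comm]

theorem superBracket_smul_left (ε : ℤˣ) (a : A) (x y : B) :
    superBracket ε (a • x) y = a • superBracket ε x y := by
  simp only [superBracket, smul_mul_assoc, mul_smul_comm, smul_sub, smul_comm ε a]

theorem superBracket_smul_right (ε : ℤˣ) (a : A) (x y : B) :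
    superBracket ε x (a • y) = a • superBracket ε x y := by
  simp only [superBracket, smul_mul_assoc, mul_smul_comm, smul_sub, smul_comm ε a]

theorem superBracket_neg_left (ε : ℤˣ) (x y : B) :
    superBracket ε (-x) y = -superBracket ε x y := by
  simp only [superBracket, neg_mul, mul_neg, smul_neg, neg_sub, sub_neg_eq_add, neg_add_eq_sub]

theorem superBracket_one_right (x : B) : superBracket 1 x 1 = 0 := by
  rw [superBracket_one_eq_sub, mul_one, one_mul, sub_self]

theorem superBracket_one_left (x : B) : superBracket 1 1 x = 0 := by
  rw [superBracket_one_eq_sub, mul_one, one_mul, sub_self]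

theorem superBracket_one_eq_zero_iff {x y : B} : superBracket 1 x y = 0 ↔ Commute x y := by
  rw [superBracket_one_eq_sub, sub_eq_zero, commute_iff_eq]

theorem map_superBracket {F : Type*} [FunLike F B C] [RingHomClass F B C] (f : F) (ε : ℤˣ)
    (x y : B) : f (superBracket ε x y) = superBracket ε (f x) (f y) := by
  simp only [superBracket, Units.smul_def, map_sub, map_zsmul, map_mul]

theorem superBracket_mul_left (ε δ : ℤˣ) (x y z : B) :
    superBracket ε (x * y) z = x * superBracket δ y z + δ • (superBracket (δ * ε) x z * y) := by
  simp only [superBracket, mul_sub, sub_mul, smul_sub, mul_smul_comm, smul_mul_assoc, smul_smul,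
    ← mul_assoc, Int.units_mul_self, one_mul, sub_add_sub_cancel]

theorem superBracket_jacobi (α β γ : ℤˣ) (x y z : B) :
    superBracket (β * γ) (superBracket α x y) z =
      superBracket (α * β) x (superBracket γ y z) -
        α • superBracket (α * γ) y (superBracket β x z) := by
  rcases Int.units_eq_one_or α with rfl | rfl <;> rcases Int.units_eq_one_or β with rfl | rfl <;>
    rcases Int.units_eq_one_or γ with rfl | rfl <;>
    simp only [mul_one, mul_neg, neg_neg, superBracket_one_eq_sub,
      superBracket_neg_one_eq_add, Units.neg_smul, one_smul] <;> noncomm_ring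

end SuperBracket

section LocallyFiniteSum

open Module

variable {ι A V : Type*} [CommRing A] [AddCommGroup V] [Module A V]

/-- The sum of a family of endomorphisms which is locally finite, in the sense that only finitely
many of them are nonzero on each vector. -/
def locFinSum (f : ι → End A V) (hf : ∀ v, (Function.support fun j => f j v).Finite) : End A V where
  toFun v := ∑ᶠ j, f j v
  map_add' v w := by
    simp only [map_add]
    exact finsum_add_distrib (hf v) (hf w)
  map_smul' a v := by
    simp only [map_smul, RingHom.id_apply]
    exact (smul_finsum' a (hf v)).symm

theorem superBracket_one_apply (X Y : End A V) (v : V) :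
    superBracket 1 X Y v = X (Y v) - Y (X v) := by
  rw [superBracket_one_eq_sub, LinearMap.sub_apply, End.mul_apply, End.mul_apply]

theorem superBracket_neg_one_apply (X Y : End A V) (v : V) :
    superBracket (-1) X Y v = X (Y v) + Y (X v) := by
  rw [superBracket_neg_one_eq_add, LinearMap.add_apply, End.mul_apply, End.mul_apply]

variable {f : ι → End A V} (hf : ∀ v, (Function.support fun j => f j v).Finite)

theorem locFinSum_apply (v : V) : locFinSum f hf v = ∑ᶠ j, f j v := rfl

theorem superBracket_locFinSum_apply (ε : ℤˣ) (T : End A V) (v : V) :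
    superBracket ε (locFinSum f hf) T v = ∑ᶠ j, superBracket ε (f j) T v := by
  have finite_support : (Function.support fun j => (ε : ℤ) • T (f j v)).Finite :=
    (hf v).subset fun j hj h => hj (by simp [h])
  simp only [superBracket, Units.smul_def, LinearMap.sub_apply, LinearMap.smul_apply,
    End.mul_apply, locFinSum_apply]
  rw [map_finsum T (hf v), finsum_sub_distrib (hf (T v)) finite_support]
  rw [smul_finsum' _ ((hf v).subset fun j hj h => hj (by simp [h]))]

theorem superBracket_locFinSum_eq_zero {ε : ℤˣ} {T : End A V}
    (h : ∀ j, superBracket ε (f j) T = 0) : superBracket ε (locFinSum f hf) T = 0 := by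
  ext v
  simp only [superBracket_locFinSum_apply, h, LinearMap.zero_apply, finsum_zero]

variable [DecidableEq ι]

theorem finsum_ite_apply (p : ι) (u : ι → End A V) (v : V) :
    ∑ᶠ j, (if j = p then u j else 0) v = u p v := by
  rw [finsum_eq_single _ p fun j hj => by rw [if_neg hj, LinearMap.zero_apply], if_pos rfl]

theorem finite_support_ite_apply (p : ι) (u : ι → End A V) (v : V) :
    (Function.support fun j => (if j = p then u j else 0) v).Finite :=
  (Set.finite_singleton p).subset <| Function.support_subset_iff'.mpr fun j hj => by
    rw [if_neg (Set.mem_singleton_iff.not.mp hj), LinearMap.zero_apply]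

theorem superBracket_locFinSum_eq_single {ε : ℤˣ} {T : End A V} {p : ι} {u : ι → End A V}
    (h : ∀ j, superBracket ε (f j) T = if j = p then u j else 0) :
    superBracket ε (locFinSum f hf) T = u p := by
  ext v
  simp only [superBracket_locFinSum_apply, h, finsum_ite_apply]

theorem superBracket_locFinSum_eq_add {ε : ℤˣ} {T : End A V} {p q : ι} {u w : ι → End A V}
    (h : ∀ j, superBracket ε (f j) T = (if j = p then u j else 0) + if j = q then w j else 0) :
    superBracket ε (locFinSum f hf) T = u p + w q := by
  ext v
  simp only [superBracket_locFinSum_apply, h, LinearMap.add_apply]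
  rw [finsum_add_distrib (finite_support_ite_apply p u v) (finite_support_ite_apply q w v),
    finsum_ite_apply, finsum_ite_apply]

end LocallyFiniteSum

/-- Operators `b_n`, `ψ_n` (`n ∈ ℤ`) on an `A`-module `V` satisfying the canonical relations
`[b_m, b_n] = m δ_{m,-n}`, `{ψ_m, ψ_n} = δ_{m,-n}`, `[b_m, ψ_n] = 0` of a free boson and a free
Ramond fermion. -/
structure OscillatorRep (A V : Type*) [CommRing A] [AddCommGroup V] [Module A V] where
  b : ℤ → Module.End A V
  ψ : ℤ → Module.End A V
  superBracket_b_b : ∀ m n, superBracket 1 (b m) (b n) = (if m = -n then (m : A) else 0) • 1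
  superBracket_ψ_ψ : ∀ m n, superBracket (-1) (ψ m) (ψ n) = (if m = -n then (1 : A) else 0) • 1
  superBracket_b_ψ : ∀ m n, superBracket 1 (b m) (ψ n) = 0

namespace OscillatorRep

open Module

variable {A V : Type*} [CommRing A] [AddCommGroup V] [Module A V] (O : OscillatorRep A V)

/-- `T` is an even operator whose only nonzero supercommutator with a mode is `[b_k, T] = t`.
Besides the modes `b_{-k}` this covers multiplication by `x^0`, which is not a mode. -/
structure IsBosonicSource (T : End A V) (k : ℤ) (t : A) : Prop where
  superBracket_b : ∀ j, superBracket 1 (O.b j) T = (if j = k then t else 0) • 1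
  superBracket_ψ : ∀ j, superBracket 1 (O.ψ j) T = 0

/-- `T` is an odd operator whose only nonzero supercommutator with a mode is `{ψ_k, T} = t`.
Besides the modes `ψ_{-k}` this covers multiplication by `θ^0`, which is not a mode. -/
structure IsFermionicSource (T : End A V) (k : ℤ) (t : A) : Prop where
  superBracket_b : ∀ j, superBracket 1 (O.b j) T = 0
  superBracket_ψ : ∀ j, superBracket (-1) (O.ψ j) T = (if j = k then t else 0) • 1

theorem isBosonicSource_b (m : ℤ) : O.IsBosonicSource (O.b m) (-m) (-m) where
  superBracket_b j := by
    rw [O.superBracket_b_b]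
    split_ifs with h <;> simp [h]
  superBracket_ψ j := by rw [superBracket_swap, O.superBracket_b_ψ, smul_zero, neg_zero]

theorem isFermionicSource_ψ (m : ℤ) : O.IsFermionicSource (O.ψ m) (-m) 1 where
  superBracket_b j := O.superBracket_b_ψ j m
  superBracket_ψ j := O.superBracket_ψ_ψ j m

/-- The normally ordered product `:b_α b_β:`. -/
def normalOrderedB (α β : ℤ) : End A V :=
  if α ≤ β then O.b α * O.b β else O.b β * O.b α

/-- The normally ordered product `:ψ_α ψ_β:`. -/
def normalOrderedψ (α β : ℤ) : End A V :=
  if α ≤ β then O.ψ α * O.ψ β else -(O.ψ β * O.ψ α)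

variable {O} {T : End A V} {k : ℤ} {t : A}

theorem normalOrderedB_apply_eq_zero {α β : ℤ} {v : V} (h : O.b (max α β) v = 0) :
    O.normalOrderedB α β v = 0 := by
  unfold normalOrderedB
  split_ifs with hαβ
  · rw [max_eq_right hαβ] at h
    rw [End.mul_apply, h, map_zero]
  · rw [max_eq_left (not_le.mp hαβ).le] at h
    rw [End.mul_apply, h, map_zero]

theorem normalOrderedψ_apply_eq_zero {α β : ℤ} {v : V} (h : O.ψ (max α β) v = 0) :
    O.normalOrderedψ α β v = 0 := by
  unfold normalOrderedψ
  split_ifs with hαβ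
  · rw [max_eq_right hαβ] at h
    rw [End.mul_apply, h, map_zero]
  · rw [max_eq_left (not_le.mp hαβ).le] at h
    rw [LinearMap.neg_apply, End.mul_apply, h, map_zero, neg_zero]

theorem IsBosonicSource.superBracket_normalOrderedB (h : O.IsBosonicSource T k t) (α β : ℤ) :
    superBracket 1 (O.normalOrderedB α β) T =
      (if α = k then t • O.b β else 0) + (if β = k then t • O.b α else 0) := by
  unfold normalOrderedB
  split_ifs <;> simp [superBracket_mul_left 1 1, h.superBracket_b, *, add_comm]

theorem IsBosonicSource.superBracket_normalOrderedψ (h : O.IsBosonicSource T k t) (α β : ℤ) :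
    superBracket 1 (O.normalOrderedψ α β) T = 0 := by
  unfold normalOrderedψ
  split_ifs <;> simp [superBracket_mul_left 1 1, h.superBracket_ψ, superBracket_neg_left]

theorem IsFermionicSource.superBracket_normalOrderedB (h : O.IsFermionicSource T k t) (α β : ℤ) :
    superBracket 1 (O.normalOrderedB α β) T = 0 := by
  unfold normalOrderedB
  split_ifs <;> simp [superBracket_mul_left 1 1, h.superBracket_b]

theorem IsFermionicSource.superBracket_normalOrderedψ (h : O.IsFermionicSource T k t) (α β : ℤ) :
    superBracket 1 (O.normalOrderedψ α β) T =
      (if β = k then t • O.ψ α else 0) - (if α = k then t • O.ψ β else 0) := by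
  unfold normalOrderedψ
  split_ifs <;> simp [superBracket_mul_left 1 (-1), h.superBracket_ψ, superBracket_neg_left, *]

end OscillatorRep

/-- A Fock representation of the boson and fermion modes: `vac` is killed by `b_j` (`j ≥ 0`) and
`ψ_j` (`j ≥ 1`), and it generates the module under the sources. -/
structure FockRep (A V : Type*) [CommRing A] [AddCommGroup V] [Module A V] extends
    OscillatorRep A V where
  vac : V
  b_vac : ∀ j, 0 ≤ j → b j vac = 0
  ψ_vac : ∀ j, 1 ≤ j → ψ j vac = 0
  cyclic : ∀ W : Submodule A V, vac ∈ W →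
    (∀ T k t, toOscillatorRep.IsBosonicSource T k t → ∀ v ∈ W, T v ∈ W) →
    (∀ T k t, toOscillatorRep.IsFermionicSource T k t → ∀ v ∈ W, T v ∈ W) → W = ⊤

namespace FockRep

open Filter Module

variable {A V : Type*} [CommRing A] [AddCommGroup V] [Module A V] (O : FockRep A V)

theorem eventually_annihilates (v : V) : ∀ᶠ j in atTop, O.b j v = 0 ∧ O.ψ j v = 0 := by
  let W : Submodule A V :=
    { carrier := {v | ∀ᶠ j in atTop, O.b j v = 0 ∧ O.ψ j v = 0}
      zero_mem' := by simp
      add_mem' := fun hv hw => by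
        filter_upwards [hv, hw] with j hv hw
        simp [hv, hw]
      smul_mem' := fun a v hv => by
        filter_upwards [hv] with j hv
        simp [hv] }
  have vac_mem : O.vac ∈ W := by
    filter_upwards [eventually_ge_atTop 1] with j hj
    exact ⟨O.b_vac j (by lia), O.ψ_vac j hj⟩
  have W_eq_top : W = ⊤ := by
    refine O.cyclic W vac_mem (fun T k t hT v hv => ?_) fun T k t hT v hv => ?_
    · filter_upwards [hv, eventually_gt_atTop k] with j ⟨hb, hψ⟩ hj
      have bracket_b := LinearMap.congr_fun (hT.superBracket_b j) v
      have bracket_ψ := LinearMap.congr_fun (hT.superBracket_ψ j) v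
      simpa [superBracket_one_eq_sub, hb, hψ, hj.ne'] using And.intro bracket_b bracket_ψ
    · filter_upwards [hv, eventually_gt_atTop k] with j ⟨hb, hψ⟩ hj
      have bracket_b := LinearMap.congr_fun (hT.superBracket_b j) v
      have bracket_ψ := LinearMap.congr_fun (hT.superBracket_ψ j) v
      simpa [superBracket_one_eq_sub, superBracket_neg_one_eq_add, hb, hψ, hj.ne'] using
        And.intro bracket_b bracket_ψ
  exact (Submodule.eq_top_iff'.mp W_eq_top) v

theorem exists_annihilation_bound (v : V) : ∃ M : ℤ, ∀ j ≥ M, O.b j v = 0 ∧ O.ψ j v = 0 :=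
  eventually_atTop.mp (O.eventually_annihilates v)

variable {O}

theorem ext_of_superBracket (ε : ℤˣ) {X Y : End A V} (hvac : X O.vac = Y O.vac)
    (hB : ∀ {T k t}, O.IsBosonicSource T k t → superBracket 1 X T = superBracket 1 Y T)
    (hF : ∀ {T k t}, O.IsFermionicSource T k t → superBracket ε X T = superBracket ε Y T) :
    X = Y := by
  have eqLocus_stable {δ : ℤˣ} {T : End A V} (hT : superBracket δ X T = superBracket δ Y T)
      (v : V) (hv : v ∈ LinearMap.eqLocus X Y) : T v ∈ LinearMap.eqLocus X Y := by
    have hXYv : X v = Y v := hv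
    simpa [superBracket, Units.smul_def, hXYv] using LinearMap.congr_fun hT v
  exact LinearMap.eqLocus_eq_top.mp <| O.cyclic _ hvac
    (fun _ _ _ hT => eqLocus_stable (hB hT)) fun _ _ _ hT => eqLocus_stable (hF hT)

variable (O)

theorem finite_support_normalOrderedB (n : ℤ) (v : V) :
    (Function.support fun j => O.normalOrderedB j (n - j) v).Finite := by
  obtain ⟨M, hM⟩ := O.exists_annihilation_bound v
  refine (Set.finite_Ioo (n - M) M).subset <| Function.support_subset_iff'.mpr fun j hj => ?_
  refine OscillatorRep.normalOrderedB_apply_eq_zero (hM _ ?_).1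
  rw [Set.mem_Ioo] at hj
  lia

theorem finite_support_smul_normalOrderedψ (n : ℤ) (c : ℤ → A) (v : V) :
    (Function.support fun j => (c j • O.normalOrderedψ (-j) (n + j)) v).Finite := by
  obtain ⟨M, hM⟩ := O.exists_annihilation_bound v
  refine (Set.finite_Ioo (-M) (M - n)).subset <| Function.support_subset_iff'.mpr fun j hj => ?_
  rw [Set.mem_Ioo] at hj
  rw [LinearMap.smul_apply,
    OscillatorRep.normalOrderedψ_apply_eq_zero (hM _ (by lia)).2, smul_zero]

theorem commute_b_ψ (m n : ℤ) : Commute (O.b m) (O.ψ n) :=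
  superBracket_one_eq_zero_iff.mp (O.superBracket_b_ψ m n)

theorem finite_support_b_mul_ψ (n : ℤ) (v : V) :
    (Function.support fun k => (O.b (n - k) * O.ψ k) v).Finite := by
  obtain ⟨M, hM⟩ := O.exists_annihilation_bound v
  refine (Set.finite_Ioo (n - M) M).subset <| Function.support_subset_iff'.mpr fun k hk => ?_
  rw [Set.mem_Ioo, not_and_or, not_lt, not_lt] at hk
  rcases hk with hk | hk
  · rw [(O.commute_b_ψ _ _).eq, End.mul_apply, (hM (n - k) (by lia)).1, map_zero]
  · rw [End.mul_apply, (hM k hk).2, map_zero]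

/-- The bosonic super Virasoro modes
`L_n = ½ Σ_j :b_j b_{n-j}: + ½ Σ_j (j + n/2) :ψ_{-j} ψ_{n+j}:`. For `n ≠ 0` this is the usual
Ramond mode; `L_0` differs from it by a constant. -/
def L [Invertible (2 : A)] (n : ℤ) : End A V :=
  (⅟2 : A) • locFinSum (fun j => O.normalOrderedB j (n - j)) (O.finite_support_normalOrderedB n) +
    (⅟2 : A) • locFinSum (fun j => (((2 * j + n : ℤ) : A) * ⅟2) • O.normalOrderedψ (-j) (n + j))
      (O.finite_support_smul_normalOrderedψ n _)

/-- The fermionic super Virasoro modes `G_n = Σ_k b_{n-k} ψ_k` of the Ramond sector. -/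
def G (n : ℤ) : End A V :=
  locFinSum (fun k => O.b (n - k) * O.ψ k) (O.finite_support_b_mul_ψ n)

section BracketsWithSources

variable {O} {T : End A V} {k : ℤ} {t : A}

theorem superBracket_L_of_isBosonicSource [Invertible (2 : A)] (h : O.IsBosonicSource T k t)
    (n : ℤ) : superBracket 1 (O.L n) T = t • O.b (n - k) := by
  have bracket_boson_term (j : ℤ) : superBracket 1 (O.normalOrderedB j (n - j)) T =
      (if j = k then t • O.b (n - j) else 0) + if j = n - k then t • O.b j else 0 := by
    rw [h.superBracket_normalOrderedB]
    simp only [show n - j = k ↔ j = n - k by lia]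
  have bracket_fermion_term (j : ℤ) :
      superBracket 1 ((((2 * j + n : ℤ) : A) * ⅟2) • O.normalOrderedψ (-j) (n + j)) T = 0 := by
    rw [superBracket_smul_left, h.superBracket_normalOrderedψ, smul_zero]
  rw [L, superBracket_add_left, superBracket_smul_left, superBracket_smul_left,
    superBracket_locFinSum_eq_add _ bracket_boson_term,
    superBracket_locFinSum_eq_zero _ bracket_fermion_term, smul_zero, add_zero,
    ← two_smul A, invOf_smul_smul]

theorem superBracket_L_of_isFermionicSource [Invertible (2 : A)]
    (h : O.IsFermionicSource T k t) (n : ℤ) :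
    superBracket 1 (O.L n) T = (t * (k - n * ⅟2)) • O.ψ (n - k) := by
  have bracket_fermion_term (j : ℤ) :
      superBracket 1 ((((2 * j + n : ℤ) : A) * ⅟2) • O.normalOrderedψ (-j) (n + j)) T =
        (if j = k - n then (((2 * j + n : ℤ) : A) * ⅟2 * t) • O.ψ (-j) else 0) +
          if j = -k then -((((2 * j + n : ℤ) : A) * ⅟2 * t) • O.ψ (n + j)) else 0 := by
    rw [superBracket_smul_left, h.superBracket_normalOrderedψ]
    simp only [show n + j = k ↔ j = k - n by lia, show -j = k ↔ j = -k by lia]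
    split_ifs <;> module
  rw [L, superBracket_add_left, superBracket_smul_left, superBracket_smul_left,
    superBracket_locFinSum_eq_zero _ fun j => h.superBracket_normalOrderedB j (n - j),
    superBracket_locFinSum_eq_add _ bracket_fermion_term, neg_sub, ← sub_eq_add_neg n k]
  have two_half : (2 : A) * ⅟2 = 1 := mul_invOf_self 2
  push_cast
  match_scalars
  linear_combination (-(⅟2 * n * t) + t * k * (2 * ⅟2 + 1)) * two_half

theorem superBracket_G_of_isBosonicSource (h : O.IsBosonicSource T k t) (n : ℤ) :
    superBracket 1 (O.G n) T = t • O.ψ (n - k) := by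
  refine superBracket_locFinSum_eq_single (u := fun j => t • O.ψ j) _ fun j => ?_
  simp [superBracket_mul_left 1 1, h.superBracket_b, h.superBracket_ψ,
    show n - j = k ↔ j = n - k by lia]

theorem superBracket_G_of_isFermionicSource (h : O.IsFermionicSource T k t) (n : ℤ) :
    superBracket (-1) (O.G n) T = t • O.b (n - k) := by
  refine superBracket_locFinSum_eq_single (u := fun j => t • O.b (n - j)) _ fun j => ?_
  simp [superBracket_mul_left (-1) (-1), h.superBracket_b, h.superBracket_ψ]

end BracketsWithSources

theorem superBracket_L_b [Invertible (2 : A)] (n m : ℤ) :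
    superBracket 1 (O.L n) (O.b m) = (-m : A) • O.b (n + m) := by
  rw [superBracket_L_of_isBosonicSource (O.isBosonicSource_b m), sub_neg_eq_add]

theorem superBracket_L_ψ [Invertible (2 : A)] (n m : ℤ) :
    superBracket 1 (O.L n) (O.ψ m) = (-m - n * ⅟2 : A) • O.ψ (n + m) := by
  rw [superBracket_L_of_isFermionicSource (O.isFermionicSource_ψ m), sub_neg_eq_add,
    Int.cast_neg, one_mul]

theorem superBracket_G_b (n m : ℤ) : superBracket 1 (O.G n) (O.b m) = (-m : A) • O.ψ (n + m) := by
  rw [superBracket_G_of_isBosonicSource (O.isBosonicSource_b m), sub_neg_eq_add]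

theorem superBracket_G_ψ (n m : ℤ) : superBracket (-1) (O.G n) (O.ψ m) = O.b (n + m) := by
  rw [superBracket_G_of_isFermionicSource (O.isFermionicSource_ψ m), sub_neg_eq_add, one_smul]

theorem L_vac [Invertible (2 : A)] {n : ℤ} (hn : 0 ≤ n) : O.L n O.vac = 0 := by
  have boson_term (j : ℤ) : O.normalOrderedB j (n - j) O.vac = 0 :=
    OscillatorRep.normalOrderedB_apply_eq_zero (O.b_vac _ (by lia))
  have fermion_term (j : ℤ) :
      (((2 * j + n : ℤ) : A) * ⅟2) • O.normalOrderedψ (-j) (n + j) O.vac = 0 := by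
    by_cases hj : 2 * j + n = 0
    · rw [hj, Int.cast_zero, zero_mul, zero_smul]
    · rw [OscillatorRep.normalOrderedψ_apply_eq_zero (O.ψ_vac _ (by lia)), smul_zero]
  simp only [L, LinearMap.add_apply, LinearMap.smul_apply, locFinSum_apply, boson_term,
    fermion_term, finsum_zero, smul_zero, add_zero]

theorem G_vac {n : ℤ} (hn : 0 ≤ n) : O.G n O.vac = 0 := by
  have term (k : ℤ) : (O.b (n - k) * O.ψ k) O.vac = 0 := by
    rcases le_or_gt 1 k with hk | hk
    · rw [End.mul_apply, O.ψ_vac k hk, map_zero]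
    · rw [(O.commute_b_ψ _ _).eq, End.mul_apply, O.b_vac (n - k) (by lia), map_zero]
  simp only [G, locFinSum_apply, term, finsum_zero]

section SuperVirasoro

variable [Invertible (2 : A)] {n m : ℤ}

theorem superBracket_L_L (hn : 0 ≤ n) (hm : 0 ≤ m) :
    superBracket 1 (O.L n) (O.L m) = (n - m : A) • O.L (n + m) := by
  refine O.ext_of_superBracket 1 ?_ (fun {T k t} h => ?_) fun {T k t} h => ?_
  · simp [superBracket_one_eq_sub, L_vac, hn, hm, add_nonneg]
  · refine (superBracket_jacobi 1 1 1 _ _ T).trans ?_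
    simp only [mul_one, one_smul, superBracket_L_of_isBosonicSource h, superBracket_smul_left,
      superBracket_smul_right, superBracket_L_b, ← add_sub_assoc, add_comm m n]
    push_cast
    module
  · refine (superBracket_jacobi 1 1 1 _ _ T).trans ?_
    simp only [mul_one, one_smul, superBracket_L_of_isFermionicSource h, superBracket_smul_left,
      superBracket_smul_right, superBracket_L_ψ, ← add_sub_assoc, add_comm m n]
    push_cast
    module

theorem superBracket_L_G (hn : 0 ≤ n) (hm : 0 ≤ m) :
    superBracket 1 (O.L n) (O.G m) = (n * ⅟2 - m : A) • O.G (n + m) := by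
  have two_half : (2 : A) * ⅟2 = 1 := mul_invOf_self 2
  refine O.ext_of_superBracket (-1) ?_ (fun {T k t} h => ?_) fun {T k t} h => ?_
  · simp [superBracket_one_eq_sub, L_vac, G_vac, hn, hm, add_nonneg]
  · refine (superBracket_jacobi 1 1 1 _ _ T).trans ?_
    simp only [mul_one, one_smul, superBracket_L_of_isBosonicSource h,
      superBracket_G_of_isBosonicSource h, superBracket_smul_left, superBracket_smul_right,
      superBracket_L_ψ, superBracket_G_b, ← add_sub_assoc, add_comm m n]
    push_cast
    match_scalars
    linear_combination -t * n * two_half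
  · refine (superBracket_jacobi 1 1 (-1) _ _ T).trans ?_
    simp only [mul_one, one_mul, one_smul, superBracket_L_of_isFermionicSource h,
      superBracket_G_of_isFermionicSource h, superBracket_smul_left, superBracket_smul_right,
      superBracket_L_b, superBracket_G_ψ, ← add_sub_assoc, add_comm m n]
    push_cast
    module

theorem superBracket_G_G (hn : 0 ≤ n) (hm : 0 ≤ m) :
    superBracket (-1) (O.G n) (O.G m) = (2 : A) • O.L (n + m) := by
  have two_half : (2 : A) * ⅟2 = 1 := mul_invOf_self 2
  refine O.ext_of_superBracket 1 ?_ (fun {T k t} h => ?_) fun {T k t} h => ?_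
  · simp [superBracket_neg_one_eq_add, L_vac, G_vac, hn, hm, add_nonneg]
  · refine (superBracket_jacobi (-1) 1 1 _ _ T).trans ?_
    simp only [mul_one, Units.neg_smul, one_smul, sub_neg_eq_add,
      superBracket_L_of_isBosonicSource h, superBracket_G_of_isBosonicSource h,
      superBracket_smul_left, superBracket_smul_right, superBracket_G_ψ, ← add_sub_assoc,
      add_comm m n]
    module
  · refine (superBracket_jacobi (-1) (-1) (-1) _ _ T).trans ?_
    simp only [mul_neg, mul_one, neg_neg, Units.neg_smul, one_smul, sub_neg_eq_add,
      superBracket_L_of_isFermionicSource h, superBracket_G_of_isFermionicSource h,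
      superBracket_smul_left, superBracket_smul_right, superBracket_G_b, ← add_sub_assoc,
      add_comm m n]
    push_cast
    match_scalars
    linear_combination t * (n + m) * two_half

end SuperVirasoro

section Airy

variable [Invertible (2 : A)] (h s : A) (N : ℤ) (d : ℤ → A)

/-- The even operators `H_i = ℏ (s b_i + L_{i+N-1} + d_i)` of the super Airy structure; `s b_i` is
`∂_{x^i}` when `s = ℏ^{-1/2}`. -/
def airyH (i : ℤ) : End A V := h • (s • O.b i + O.L (i + N - 1) + d i • 1)

/-- The odd operators `F_j = ℏ (s ψ_j + G_{j+N-1})` of the super Airy structure; `s ψ_j` is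
`∂_{θ^j}` when `s = ℏ^{-1/2}` and `j ≥ 1`. -/
def airyF (j : ℤ) : End A V := h • (s • O.ψ j + O.G (j + N - 1))

variable {N d} {i i' j j' : ℤ}

theorem superBracket_airyH_airyH (hN : 1 ≤ N) (hd : ∀ i, N ≤ i → d i = 0) (hi : 0 ≤ i)
    (hi' : 0 ≤ i') :
    superBracket 1 (O.airyH h s N d i) (O.airyH h s N d i') =
      (h * (i - i')) • O.airyH h s N d (i + i' + N - 1) := by
  have bracket_b_b : superBracket 1 (O.b i) (O.b i') = 0 := by
    rw [O.superBracket_b_b]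
    split_ifs with hii'
    · rw [show i = 0 by lia, Int.cast_zero, zero_smul]
    · rw [zero_smul]
  have bracket_b_L : superBracket 1 (O.b i) (O.L (i' + N - 1)) =
      (i : A) • O.b (i + i' + N - 1) := by
    rw [superBracket_swap, superBracket_L_b, one_smul,
      show i' + N - 1 + i = i + i' + N - 1 by ring]
    module
  have bracket_L_b : superBracket 1 (O.L (i + N - 1)) (O.b i') =
      (-i' : A) • O.b (i + i' + N - 1) := by
    rw [superBracket_L_b, show i + N - 1 + i' = i + i' + N - 1 by ring]
  have bracket_L_L : superBracket 1 (O.L (i + N - 1)) (O.L (i' + N - 1)) =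
      (i - i' : A) • O.L (i + i' + N - 1 + N - 1) := by
    rw [superBracket_L_L O (by lia) (by lia),
      show i + N - 1 + (i' + N - 1) = i + i' + N - 1 + N - 1 by ring]
    push_cast
    module
  have constant_term : (i - i' : A) * d (i + i' + N - 1) = 0 := by
    rcases eq_or_ne i i' with rfl | hii'
    · rw [sub_self, zero_mul]
    · rw [hd _ (by lia), mul_zero]
  simp only [airyH, superBracket_smul_left, superBracket_smul_right, superBracket_add_left,
    superBracket_add_right, superBracket_one_right, superBracket_one_left, bracket_b_b, bracket_b_L,
    bracket_L_b, bracket_L_L]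
  match_scalars
  · ring
  · ring
  · linear_combination (-h ^ 2) * constant_term

theorem superBracket_airyH_airyF (hN : 1 ≤ N) (hi : 0 ≤ i) (hj : 1 ≤ j) :
    superBracket 1 (O.airyH h s N d i) (O.airyF h s N j) =
      (h * (i - N + 1 - 2 * j) * ⅟2) • O.airyF h s N (i + j + N - 1) := by
  have bracket_b_G : superBracket 1 (O.b i) (O.G (j + N - 1)) =
      (i : A) • O.ψ (i + j + N - 1) := by
    rw [superBracket_swap, superBracket_G_b, one_smul, show j + N - 1 + i = i + j + N - 1 by ring]
    module
  have bracket_L_ψ : superBracket 1 (O.L (i + N - 1)) (O.ψ j) =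
      (-j - (i + N - 1) * ⅟2 : A) • O.ψ (i + j + N - 1) := by
    rw [superBracket_L_ψ, show i + N - 1 + j = i + j + N - 1 by ring]
    push_cast
    rfl
  have bracket_L_G : superBracket 1 (O.L (i + N - 1)) (O.G (j + N - 1)) =
      ((i + N - 1) * ⅟2 - (j + N - 1) : A) • O.G (i + j + N - 1 + N - 1) := by
    rw [superBracket_L_G O (by lia) (by lia),
      show i + N - 1 + (j + N - 1) = i + j + N - 1 + N - 1 by ring]
    push_cast
    rfl
  have two_half : (2 : A) * ⅟2 = 1 := mul_invOf_self 2
  simp only [airyH, airyF, superBracket_smul_left, superBracket_smul_right, superBracket_add_left,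
    superBracket_add_right, superBracket_one_left, O.superBracket_b_ψ, bracket_b_G, bracket_L_ψ,
    bracket_L_G]
  match_scalars
  · linear_combination (h ^ 2 * s * (j - i)) * two_half
  · linear_combination (h ^ 2 * (j + N - 1)) * two_half

theorem superBracket_airyF_airyF (hN : 1 ≤ N) (hd : ∀ i, N ≤ i → d i = 0) (hj : 1 ≤ j)
    (hj' : 1 ≤ j') :
    superBracket (-1) (O.airyF h s N j) (O.airyF h s N j') =
      (2 * h) • O.airyH h s N d (j + j' + N - 1) := by
  have bracket_ψ_ψ : superBracket (-1) (O.ψ j) (O.ψ j') = 0 := by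
    rw [O.superBracket_ψ_ψ, if_neg (by lia), zero_smul]
  have bracket_ψ_G : superBracket (-1) (O.ψ j) (O.G (j' + N - 1)) = O.b (j + j' + N - 1) := by
    rw [superBracket_swap, superBracket_G_ψ, Units.neg_smul, one_smul, neg_neg,
      show j' + N - 1 + j = j + j' + N - 1 by ring]
  have bracket_G_ψ : superBracket (-1) (O.G (j + N - 1)) (O.ψ j') = O.b (j + j' + N - 1) := by
    rw [superBracket_G_ψ, show j + N - 1 + j' = j + j' + N - 1 by ring]
  have bracket_G_G : superBracket (-1) (O.G (j + N - 1)) (O.G (j' + N - 1)) =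
      (2 : A) • O.L (j + j' + N - 1 + N - 1) := by
    rw [superBracket_G_G O (by lia) (by lia),
      show j + N - 1 + (j' + N - 1) = j + j' + N - 1 + N - 1 by ring]
  simp only [airyH, airyF, superBracket_smul_left, superBracket_smul_right, superBracket_add_left,
    superBracket_add_right, bracket_ψ_ψ, bracket_ψ_G, bracket_G_ψ, bracket_G_G,
    hd (j + j' + N - 1) (by lia)]
  module

end Airy

end FockRep

section PolynomialModes

open Module MvPolynomial

variable {A : Type*} [CommRing A]

theorem commute_pderiv {σ : Type*} (a b : σ) :
    Commute ((pderiv a).toLinearMap : End A (MvPolynomial σ A)) (pderiv b).toLinearMap := by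
  classical
  let D (a : σ) : Derivation A (MvPolynomial σ A) (MvPolynomial σ A) := pderiv a
  have lie_eq_zero : ⁅D a, D b⁆ = 0 := derivation_ext fun c => by
    rw [Derivation.commutator_apply]
    simp [D, pderiv_X, Pi.single_apply, apply_ite]
  refine LinearMap.ext fun p => sub_eq_zero.mp ?_
  exact (Derivation.commutator_apply p).symm.trans (DFunLike.congr_fun lie_eq_zero p)

theorem superBracket_pderiv_mulLeft_X {σ : Type*} [DecidableEq σ] (a b : σ) :
    superBracket 1 ((pderiv a).toLinearMap : End A (MvPolynomial σ A))
      (LinearMap.mulLeft A (X b : MvPolynomial σ A)) = (if a = b then (1 : A) else 0) • 1 := by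
  refine LinearMap.ext fun p => ?_
  rw [superBracket_one_eq_sub]
  split_ifs with h <;> simp [Derivation.leibniz, pderiv_X, h, eq_comm]

variable (t : Aˣ)

/-- The boson modes on `A[x^0, x^1, …]` with `√ℏ = t`: `b_k = √ℏ ∂_{x^k}` for `k ≥ 0` and
`b_{-k} = (k/√ℏ) x^k` for `k ≥ 1`. -/
def bosonMode (k : ℤ) : End A (MvPolynomial ℕ A) :=
  if 0 ≤ k then (t : A) • (pderiv k.toNat).toLinearMap
  else (((-k : ℤ) : A) * (t⁻¹ : Aˣ)) • LinearMap.mulLeft A (X (-k).toNat)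

theorem superBracket_bosonMode_mulLeft_X (k : ℤ) (a : ℕ) :
    superBracket 1 (bosonMode t k) (LinearMap.mulLeft A (X a : MvPolynomial ℕ A)) =
      (if k = a then (t : A) else 0) • 1 := by
  unfold bosonMode
  split_ifs with hk hka hka
  · rw [superBracket_smul_left, superBracket_pderiv_mulLeft_X, if_pos (by lia), one_smul]
  · rw [superBracket_smul_left, superBracket_pderiv_mulLeft_X, if_neg (by lia), zero_smul,
      smul_zero]
  · lia
  · rw [superBracket_smul_left, superBracket_one_eq_zero_iff.mpr, smul_zero, zero_smul]
    exact LinearMap.ext fun p => mul_left_comm _ _ p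

theorem superBracket_bosonMode_bosonMode (m n : ℤ) :
    superBracket 1 (bosonMode t m) (bosonMode t n) = (if m = -n then (m : A) else 0) • 1 := by
  have of_neg {m n : ℤ} (hn : n < 0) : superBracket 1 (bosonMode t m) (bosonMode t n) =
      (if m = -n then (m : A) else 0) • 1 := by
    rw [bosonMode.eq_def t n, if_neg (by lia), superBracket_smul_right,
      superBracket_bosonMode_mulLeft_X, smul_smul]
    split_ifs with h₁ h₂ h₂
    · rw [mul_assoc, Units.inv_mul, mul_one, h₂]
    · lia
    · lia
    · rw [mul_zero]
  rcases lt_or_ge n 0 with hn | hn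
  · exact of_neg hn
  rcases lt_or_ge m 0 with hm | hm
  · rw [superBracket_swap, of_neg hm, one_smul]
    split_ifs with h₁ h₂ h₂
    · rw [h₁, Int.cast_neg]
      module
    · lia
    · lia
    · rw [zero_smul, neg_zero]
  · rw [bosonMode.eq_def t m, bosonMode.eq_def t n, if_pos hm, if_pos hn, superBracket_smul_left,
      superBracket_smul_right, superBracket_one_eq_zero_iff.mpr (commute_pderiv _ _), smul_zero,
      smul_zero]
    split_ifs with h
    · rw [show m = 0 by lia, Int.cast_zero, zero_smul]
    · rw [zero_smul]

end PolynomialModes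

section ExteriorModes

open Module ExteriorAlgebra

variable {A M : Type*} [CommRing A] [AddCommGroup M] [Module A M]

/-- The operator `v ∧ · + d ⌟ ·` on the exterior algebra of `M`. -/
def wedgeAddContract (v : M) (d : Dual A M) : End A (ExteriorAlgebra A M) :=
  LinearMap.mulLeft A (ι A v) + CliffordAlgebra.contractLeft d

theorem superBracket_wedgeAddContract (v v' : M) (d d' : Dual A M) :
    superBracket (-1) (wedgeAddContract v d) (wedgeAddContract v' d') = (d v' + d' v) • 1 := by
  refine LinearMap.ext fun x => ?_
  have wedge_wedge : ι A v * (ι A v' * x) + ι A v' * (ι A v * x) = 0 := by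
    rw [← mul_assoc, ← mul_assoc, ← add_mul, ι_add_mul_swap, zero_mul]
  have contract_wedge (d : Dual A M) (v : M) :
      CliffordAlgebra.contractLeft d (ι A v * x) =
        d v • x - ι A v * CliffordAlgebra.contractLeft d x :=
    CliffordAlgebra.contractLeft_ι_mul d v x
  have contract_contract : CliffordAlgebra.contractLeft d (CliffordAlgebra.contractLeft d' x) =
      -CliffordAlgebra.contractLeft d' (CliffordAlgebra.contractLeft d x) :=
    CliffordAlgebra.contractLeft_comm (Q := (0 : QuadraticForm A M)) d d' x
  simp only [superBracket_neg_one_eq_add, wedgeAddContract, LinearMap.add_apply, End.mul_apply,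
    LinearMap.mulLeft_apply, LinearMap.smul_apply, End.one_apply, mul_add,
    contract_contract, contract_wedge, add_smul]
  rw [← sub_eq_zero, ← wedge_wedge]
  abel

/-- The factor by which `ψ_0` differs from the pattern of the other fermion modes: `r` plays the
role of `1/√2`. -/
def fermionWeight (r : A) (n : ℤ) : A := if n = 0 then r else 1

variable (t : Aˣ) (r : A)

/-- The exterior multiplication part of the fermion mode `ψ_n`. -/
def fermionVec (n : ℤ) : ℕ →₀ A :=
  if n ≤ 0 then (fermionWeight r n * (t⁻¹ : Aˣ)) • Finsupp.single n.natAbs 1 else 0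

/-- The contraction part of the fermion mode `ψ_n`. -/
def fermionDual (n : ℤ) : Dual A (ℕ →₀ A) :=
  if 0 ≤ n then (fermionWeight r n * t) • Finsupp.lapply n.natAbs else 0

theorem fermionDual_single (n : ℤ) (a : ℕ) :
    fermionDual t r n (Finsupp.single a 1) = if n = a then fermionWeight r n * t else 0 := by
  unfold fermionDual
  split_ifs with hn hna hna
  · simp [hna]
  · simp [show a ≠ n.natAbs by lia]
  · lia
  · rfl

theorem fermionDual_fermionVec (m n : ℤ) : fermionDual t r m (fermionVec t r n) =
    if 0 ≤ m ∧ m = -n then fermionWeight r m * fermionWeight r n else 0 := by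
  unfold fermionVec
  split_ifs with hn hm hm
  · rw [map_smul, fermionDual_single, if_pos (by lia), smul_eq_mul]
    linear_combination (fermionWeight r m * fermionWeight r n) * t.inv_mul
  · rw [map_smul, fermionDual_single, if_neg (by lia), smul_zero]
  · lia
  · rw [map_zero]

variable {r}

theorem fermionDual_fermionVec_add (hr : 2 * (r * r) = 1) (m n : ℤ) :
    fermionDual t r m (fermionVec t r n) + fermionDual t r n (fermionVec t r m) =
      if m = -n then 1 else 0 := by
  simp only [fermionDual_fermionVec, fermionWeight]
  split_ifs <;> first | lia | simp [← two_mul, hr]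

variable (r) in
/-- The fermion modes on `Λ(θ^0, θ^1, …)` with `√ℏ = t` and `1/√2 = r`. -/
def fermionMode (n : ℤ) : End A (ExteriorAlgebra A (ℕ →₀ A)) :=
  wedgeAddContract (fermionVec t r n) (fermionDual t r n)

variable (r) in
theorem fermionMode_of_pos {n : ℤ} (hn : 1 ≤ n) :
    fermionMode t r n = (t : A) • CliffordAlgebra.contractLeft (Finsupp.lapply n.toNat) := by
  simp [fermionMode, wedgeAddContract, fermionVec, fermionDual, fermionWeight,
    show ¬n ≤ 0 by lia, show 0 ≤ n by lia, show n ≠ 0 by lia, show n.natAbs = n.toNat by lia]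

variable (r) in
theorem fermionMode_of_neg {n : ℤ} (hn : n < 0) :
    fermionMode t r n =
      ((t⁻¹ : Aˣ) : A) • LinearMap.mulLeft A (ι A (Finsupp.single (-n).toNat (1 : A))) := by
  refine LinearMap.ext fun x => ?_
  simp [-Finsupp.smul_single, fermionMode, wedgeAddContract, fermionVec, fermionDual,
    fermionWeight, hn.le, hn.not_ge,
    hn.ne, show n.natAbs = (-n).toNat by lia]

variable (r) in
theorem fermionMode_zero : fermionMode t r 0 = (r * (t⁻¹ : Aˣ)) •
    (LinearMap.mulLeft A (ι A (Finsupp.single 0 (1 : A))) +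
      (t * t : A) • CliffordAlgebra.contractLeft (Finsupp.lapply 0)) := by
  rw [smul_add, smul_smul, show r * (t⁻¹ : Aˣ) * (t * t : A) = r * t by
    linear_combination (r * t) * t.inv_mul]
  refine LinearMap.ext fun x => ?_
  simp [-Finsupp.smul_single, fermionMode, wedgeAddContract, fermionVec, fermionDual,
    fermionWeight]

theorem superBracket_fermionMode_fermionMode (hr : 2 * (r * r) = 1) (m n : ℤ) :
    superBracket (-1) (fermionMode t r m) (fermionMode t r n) =
      (if m = -n then (1 : A) else 0) • 1 := by
  rw [fermionMode, fermionMode, superBracket_wedgeAddContract, fermionDual_fermionVec_add t hr]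

theorem superBracket_fermionMode_mulLeft_ι (n : ℤ) (a : ℕ) :
    superBracket (-1) (fermionMode t r n)
        (LinearMap.mulLeft A (ι A (Finsupp.single a (1 : A)))) =
      (if n = a then fermionWeight r a * t else 0) • 1 := by
  have mulLeft_eq : LinearMap.mulLeft A (ι A (Finsupp.single a (1 : A))) =
      wedgeAddContract (Finsupp.single a 1) 0 := by
    rw [wedgeAddContract, map_zero, add_zero]
  rw [mulLeft_eq, fermionMode, superBracket_wedgeAddContract, fermionDual_single,
    LinearMap.zero_apply, add_zero]
  split_ifs with h <;> simp [h]

end ExteriorModes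

section TensorFactors

open Module

variable {A M M' : Type*} [CommRing A] [AddCommGroup M] [Module A M] [AddCommGroup M']
  [Module A M']

theorem commute_rTensor_lTensor (f : End A M) (g : End A M') :
    Commute (f.rTensor M') (g.lTensor M) := by
  rw [commute_iff_eq, End.mul_eq_comp, End.mul_eq_comp, LinearMap.rTensor_comp_lTensor,
    LinearMap.lTensor_comp_rTensor]

theorem superBracket_rTensor {ε : ℤˣ} {f g : End A M} {c : A} (h : superBracket ε f g = c • 1) :
    superBracket ε (f.rTensor M') (g.rTensor M') = c • 1 := by
  have map_bracket := map_superBracket (End.rTensorAlgHom A M M') ε f g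
  rw [h, map_smul, map_one] at map_bracket
  exact map_bracket.symm

theorem superBracket_lTensor {ε : ℤˣ} {f g : End A M'} {c : A} (h : superBracket ε f g = c • 1) :
    superBracket ε (f.lTensor M) (g.lTensor M) = c • 1 := by
  have map_bracket := map_superBracket (End.lTensorAlgHom A M' M) ε f g
  rw [h, map_smul, map_one] at map_bracket
  exact map_bracket.symm

end TensorFactors

section Cyclicity

variable {A S : Type*} [CommRing A] [Ring S] [Algebra A S]

theorem submodule_eq_top_of_adjoin_eq_top {s : Set S} (hs : Algebra.adjoin A s = ⊤)
    {W : Submodule A S} (one_mem : 1 ∈ W) (mul_mem : ∀ x ∈ s, ∀ w ∈ W, x * w ∈ W) : W = ⊤ := by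
  refine Submodule.eq_top_iff'.mpr fun x => ?_
  have mul_mem_of_adjoin (x : S) (hx : x ∈ Algebra.adjoin A s) : ∀ w ∈ W, x * w ∈ W := by
    induction hx using Algebra.adjoin_induction with
    | mem x hx => exact mul_mem x hx
    | algebraMap a => exact fun w hw => by simpa [← Algebra.smul_def] using W.smul_mem a hw
    | add x y _ _ hx hy => exact fun w hw => by simpa [add_mul] using W.add_mem (hx w hw) (hy w hw)
    | mul x y _ _ hx hy => exact fun w hw => by simpa [mul_assoc] using hx _ (hy w hw)
  simpa using mul_mem_of_adjoin x (hs ▸ Algebra.mem_top) 1 one_mem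

theorem adjoin_range_ι_single (σ : Type*) :
    Algebra.adjoin A (Set.range fun a : σ => ExteriorAlgebra.ι A (Finsupp.single a (1 : A))) =
      ⊤ := by
  rw [eq_top_iff, ← CliffordAlgebra.adjoin_range_ι, Algebra.adjoin_le_iff]
  rintro _ ⟨v, rfl⟩
  induction v using Finsupp.induction_linear with
  | zero => simp
  | add v w hv hw => simpa using add_mem hv hw
  | single a c =>
    rw [← mul_one c, ← smul_eq_mul, ← Finsupp.smul_single, map_smul]
    exact Subalgebra.smul_mem _ (Algebra.subset_adjoin (Set.mem_range_self a)) c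

theorem submodule_eq_top_of_adjoin_tensor {S' : Type*} [Ring S'] [Algebra A S'] {s : Set S}
    {s' : Set S'} (hs : Algebra.adjoin A s = ⊤) (hs' : Algebra.adjoin A s' = ⊤)
    {W : Submodule A (S ⊗[A] S')} (one_mem : 1 ⊗ₜ 1 ∈ W)
    (rTensor_mem : ∀ x ∈ s, ∀ w ∈ W, (LinearMap.mulLeft A x).rTensor S' w ∈ W)
    (lTensor_mem : ∀ y ∈ s', ∀ w ∈ W, (LinearMap.mulLeft A y).lTensor S w ∈ W) : W = ⊤ := by
  have tmul_one_mem : W.comap ((TensorProduct.mk A S S').flip 1) = ⊤ :=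
    submodule_eq_top_of_adjoin_eq_top hs one_mem fun x hx p hp => rTensor_mem x hx _ hp
  have tmul_mem (p : S) : W.comap (TensorProduct.mk A S S' p) = ⊤ :=
    submodule_eq_top_of_adjoin_eq_top hs' (Submodule.eq_top_iff'.mp tmul_one_mem p)
      fun y hy q hq => lTensor_mem y hy _ hq
  rw [eq_top_iff, ← TensorProduct.span_tmul_eq_top, Submodule.span_le]
  rintro _ ⟨p, q, rfl⟩
  exact Submodule.eq_top_iff'.mp (tmul_mem p) q

end Cyclicity

section FockSpace

open MvPolynomial

variable {A : Type*} [CommRing A] (t : Aˣ) {r : A} (hr : 2 * (r * r) = 1)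

/-- The boson and fermion modes on `A[x^0, x^1, …] ⊗ Λ(θ^0, θ^1, …)` with `√ℏ = t` and
`1/√2 = r`. -/
def polynomialExteriorRep :
    OscillatorRep A (MvPolynomial ℕ A ⊗[A] ExteriorAlgebra A (ℕ →₀ A)) where
  b k := (bosonMode t k).rTensor _
  ψ n := (fermionMode t r n).lTensor _
  superBracket_b_b m n := superBracket_rTensor (superBracket_bosonMode_bosonMode t m n)
  superBracket_ψ_ψ m n := superBracket_lTensor (superBracket_fermionMode_fermionMode t hr m n)
  superBracket_b_ψ _ _ := superBracket_one_eq_zero_iff.mpr (commute_rTensor_lTensor _ _)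

theorem isBosonicSource_X (a : ℕ) : (polynomialExteriorRep t hr).IsBosonicSource
    ((LinearMap.mulLeft A (X a : MvPolynomial ℕ A)).rTensor _) a t where
  superBracket_b j := superBracket_rTensor (superBracket_bosonMode_mulLeft_X t j a)
  superBracket_ψ _ := superBracket_one_eq_zero_iff.mpr (commute_rTensor_lTensor _ _).symm

theorem isFermionicSource_ι_single (a : ℕ) : (polynomialExteriorRep t hr).IsFermionicSource
    ((LinearMap.mulLeft A (ExteriorAlgebra.ι A (Finsupp.single a (1 : A)))).lTensor _) a
    (fermionWeight r a * t) where
  superBracket_b _ := superBracket_one_eq_zero_iff.mpr (commute_rTensor_lTensor _ _)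
  superBracket_ψ j := superBracket_lTensor (superBracket_fermionMode_mulLeft_ι t j a)

/-- The Fock representation on `A[x^0, x^1, …] ⊗ Λ(θ^0, θ^1, …)`, with vacuum `1 ⊗ 1`. -/
def fockRep : FockRep A (MvPolynomial ℕ A ⊗[A] ExteriorAlgebra A (ℕ →₀ A)) where
  toOscillatorRep := polynomialExteriorRep t hr
  vac := 1 ⊗ₜ 1
  b_vac j hj := by
    refine (LinearMap.rTensor_tmul _ _ _ _).trans ?_
    rw [bosonMode, if_pos hj]
    simp
  ψ_vac j hj := by
    refine (LinearMap.lTensor_tmul _ _ _ _).trans ?_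
    rw [fermionMode_of_pos t r hj]
    simp
  cyclic W vac_mem bosonic_mem fermionic_mem := by
    refine submodule_eq_top_of_adjoin_tensor MvPolynomial.adjoin_range_X (adjoin_range_ι_single ℕ)
      vac_mem ?_ ?_
    · rintro _ ⟨a, rfl⟩
      exact bosonic_mem _ _ _ (isBosonicSource_X t hr a)
    · rintro _ ⟨a, rfl⟩
      exact fermionic_mem _ _ _ (isFermionicSource_ι_single t hr a)

end FockSpace

section LaurentModes

open LaurentPolynomial Module

variable (𝕜 : Type) [Field 𝕜]

/-- `√ℏ = t` as a unit of `𝕜[t, t⁻¹]`. -/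
def sqrtHbar : (R 𝕜)ˣ where
  val := T 1
  inv := T (-1)
  val_inv := by rw [← T_add, add_neg_cancel, T_zero]
  inv_val := by rw [← T_add, neg_add_cancel, T_zero]

theorem sqrtHbar_sq : (sqrtHbar 𝕜 : R 𝕜) * sqrtHbar 𝕜 = hb 𝕜 := (T_add 1 1).symm

theorem two_mul_cs_inv_two [NeZero (2 : 𝕜)] : (2 : R 𝕜) * cs 𝕜 2⁻¹ = 1 := by
  rw [cs, ← map_ofNat (C : 𝕜 →+* R 𝕜) 2, ← map_mul, mul_inv_cancel₀ two_ne_zero, map_one]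

instance invertibleTwoLaurent [NeZero (2 : 𝕜)] : Invertible (2 : R 𝕜) :=
  ⟨cs 𝕜 2⁻¹, (mul_comm _ _).trans (two_mul_cs_inv_two 𝕜), two_mul_cs_inv_two 𝕜⟩

theorem invOf_two_eq_cs [NeZero (2 : 𝕜)] : (⅟2 : R 𝕜) = cs 𝕜 2⁻¹ := rfl

variable {𝕜} {s2 : 𝕜}

theorem two_mul_cs_inv_sq [NeZero (2 : 𝕜)] (hs2 : s2 ^ 2 = 2) :
    2 * (cs 𝕜 s2⁻¹ * cs 𝕜 s2⁻¹) = 1 := by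
  rw [cs, ← map_mul, ← mul_inv, ← pow_two, hs2]
  exact two_mul_cs_inv_two 𝕜

/-- The Fock representation by the modes `bos` and `fer`. -/
def superSpaceRep [NeZero (2 : 𝕜)] (hs2 : s2 ^ 2 = 2) : FockRep (R 𝕜) (SuperSpace 𝕜) :=
  fockRep (sqrtHbar 𝕜) (two_mul_cs_inv_sq hs2)

variable [NeZero (2 : 𝕜)] (hs2 : s2 ^ 2 = 2)

theorem bos_eq_b (k : ℤ) : bos 𝕜 k = (superSpaceRep hs2).b k := by
  change bos 𝕜 k = (bosonMode (sqrtHbar 𝕜) k).rTensor (Podd 𝕜)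
  unfold bos bosonMode
  split_ifs <;> rw [LinearMap.rTensor_smul] <;> rfl

theorem fer_eq_ψ (n : ℤ) : fer 𝕜 s2 n = (superSpaceRep hs2).ψ n := by
  change fer 𝕜 s2 n = (fermionMode (sqrtHbar 𝕜) (cs 𝕜 s2⁻¹) n).lTensor (Pev 𝕜)
  unfold fer
  split_ifs with hpos hzero
  · rw [fermionMode_of_pos _ _ hpos, LinearMap.lTensor_smul]
    rfl
  · rw [hzero, fermionMode_zero, LinearMap.lTensor_smul, LinearMap.lTensor_add,
      LinearMap.lTensor_smul, sqrtHbar_sq]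
    rfl
  · rw [fermionMode_of_neg _ _ (by lia), LinearMap.lTensor_smul]
    rfl

theorem nb_eq_normalOrderedB (α β : ℤ) :
    nb 𝕜 α β = (superSpaceRep hs2).normalOrderedB α β := by
  unfold nb OscillatorRep.normalOrderedB
  simp only [bos_eq_b hs2]
  split_ifs <;> rfl

theorem nf_eq_normalOrderedψ (α β : ℤ) :
    nf 𝕜 s2 α β = (superSpaceRep hs2).normalOrderedψ α β := by
  unfold nf OscillatorRep.normalOrderedψ
  simp only [fer_eq_ψ hs2]
  split_ifs <;> rfl

theorem dXi_eq_smul_b {i : ℤ} (hi : 0 ≤ i) (v : SuperSpace 𝕜) :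
    dXi 𝕜 i v = (T (-1) : R 𝕜) • (superSpaceRep hs2).b i v := by
  rw [← bos_eq_b, dXi, bos, if_pos hi, if_pos hi, smul_smul, ← T_add, neg_add_cancel, T_zero,
    one_smul]

theorem dTi_eq_smul_ψ {j : ℤ} (hj : 1 ≤ j) (v : SuperSpace 𝕜) :
    dTi 𝕜 j v = (T (-1) : R 𝕜) • (superSpaceRep hs2).ψ j v := by
  rw [← fer_eq_ψ, dTi, fer, if_pos hj, if_pos hj, smul_smul, ← T_add, neg_add_cancel, T_zero,
    one_smul]

theorem Hop_eq_airyH (N : ℤ) (D : ℤ → 𝕜) {i : ℤ} (hi : 0 ≤ i) :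
    Hop 𝕜 s2 N D i = (superSpaceRep hs2).airyH (hb 𝕜) (T (-1)) N
      (fun i => if i ≤ N - 1 then cs 𝕜 (D i) else 0) i := by
  funext v
  have index_eq (j : ℤ) : 2 * j + i + N - 1 = 2 * j + (i + N - 1) := by ring
  have ite_eq : (if i ≤ N - 1 then (hb 𝕜 * cs 𝕜 (D i)) • v else 0) =
      (hb 𝕜 * if i ≤ N - 1 then cs 𝕜 (D i) else 0) • v := by
    split_ifs <;> simp only [mul_zero, zero_smul]
  simp only [Hop, FockRep.airyH, FockRep.L, dXi_eq_smul_b hs2 hi, nb_eq_normalOrderedB hs2,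
    nf_eq_normalOrderedψ hs2, index_eq, ite_eq, LinearMap.smul_apply, LinearMap.add_apply,
    End.one_apply, locFinSum_apply, invOf_two_eq_cs]
  module

theorem Fop_eq_airyF (N : ℤ) {j : ℤ} (hj : 1 ≤ j) :
    Fop 𝕜 s2 N j = (superSpaceRep hs2).airyF (hb 𝕜) (T (-1)) N j := by
  funext v
  simp only [Fop, FockRep.airyF, FockRep.G, dTi_eq_smul_ψ hs2 hj, bos_eq_b hs2, fer_eq_ψ hs2,
    LinearMap.smul_apply, LinearMap.add_apply, End.mul_apply, locFinSum_apply, smul_add]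

end LaurentModes

theorem statement9_general (𝕜 : Type) [Field 𝕜] [NeZero (2 : 𝕜)] (s2 : 𝕜) (hs2 : s2 ^ 2 = 2)
    (N : ℤ) (hN : 1 ≤ N) (D : ℤ → 𝕜) :
    (∀ i i' : ℤ, 0 ≤ i → 0 ≤ i' → ∀ v : SuperSpace 𝕜,
      Hop 𝕜 s2 N D i (Hop 𝕜 s2 N D i' v) - Hop 𝕜 s2 N D i' (Hop 𝕜 s2 N D i v)
        = (hb 𝕜 * ((i - i' : ℤ) : R 𝕜)) • Hop 𝕜 s2 N D (i + i' + N - 1) v) ∧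
    (∀ i j : ℤ, 0 ≤ i → 1 ≤ j → ∀ v : SuperSpace 𝕜,
      Hop 𝕜 s2 N D i (Fop 𝕜 s2 N j v) - Fop 𝕜 s2 N j (Hop 𝕜 s2 N D i v)
        = (hb 𝕜 * ((i - N + 1 - 2 * j : ℤ) : R 𝕜) * cs 𝕜 (2 : 𝕜)⁻¹) •
            Fop 𝕜 s2 N (i + j + N - 1) v) ∧
    (∀ j j' : ℤ, 1 ≤ j → 1 ≤ j' → ∀ v : SuperSpace 𝕜,
      Fop 𝕜 s2 N j (Fop 𝕜 s2 N j' v) + Fop 𝕜 s2 N j' (Fop 𝕜 s2 N j v)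
        = (2 * hb 𝕜) • Hop 𝕜 s2 N D (j + j' + N - 1) v) := by
  have hd (i : ℤ) (hi : N ≤ i) : (if i ≤ N - 1 then cs 𝕜 (D i) else 0) = 0 :=
    if_neg (by lia)
  refine ⟨fun i i' hi hi' v => ?_, fun i j hi hj v => ?_, fun j j' hj hj' v => ?_⟩
  · rw [Hop_eq_airyH hs2 N D hi, Hop_eq_airyH hs2 N D hi', Hop_eq_airyH hs2 N D (by lia)]
    refine (superBracket_one_apply _ _ v).symm.trans ?_
    rw [FockRep.superBracket_airyH_airyH _ _ _ hN hd hi hi', LinearMap.smul_apply, Int.cast_sub]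
  · rw [Hop_eq_airyH hs2 N D hi, Fop_eq_airyF hs2 N hj, Fop_eq_airyF hs2 N (by lia)]
    refine (superBracket_one_apply _ _ v).symm.trans ?_
    rw [FockRep.superBracket_airyH_airyF _ _ _ hN hi hj, LinearMap.smul_apply, invOf_two_eq_cs]
    push_cast
    rfl
  · rw [Fop_eq_airyF hs2 N hj, Fop_eq_airyF hs2 N hj', Hop_eq_airyH hs2 N D (by lia)]
    refine (superBracket_neg_one_apply _ _ v).symm.trans ?_
    rw [FockRep.superBracket_airyF_airyF _ _ _ hN hd hj hj', LinearMap.smul_apply]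

/-- For `N ≥ 1` and scalars `D_0, …, D_{N−1}`, the operators `H_i`
(`i ∈ ℤ_{≥0}`) and `F_j` (`j ∈ ℤ_{≥1}`) satisfy the Ramond super Virasoro relations
`[H_i, H_{i′}] = ℏ(i−i′) H_{i+i′+N−1}`, `[H_i, F_j] = ℏ((i−N+1)/2 − j) F_{i+j+N−1}` and
`{F_j, F_{j′}} = 2ℏ H_{j+j′+N−1}` (a super quantum Airy structure with one extra
fermionic variable `θ⁰`). -/
theorem statement9 (hs2 : s2 ^ 2 = 2) (N : ℤ) (hN : 1 ≤ N) (D : ℤ → K) :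
    (∀ i i' : ℤ, 0 ≤ i → 0 ≤ i' → ∀ v : SuperSpace K,
      Hop K s2 N D i (Hop K s2 N D i' v) - Hop K s2 N D i' (Hop K s2 N D i v)
        = (hb K * ((i - i' : ℤ) : R K)) • Hop K s2 N D (i + i' + N - 1) v) ∧
    (∀ i j : ℤ, 0 ≤ i → 1 ≤ j → ∀ v : SuperSpace K,
      Hop K s2 N D i (Fop K s2 N j v) - Fop K s2 N j (Hop K s2 N D i v)
        = (hb K * ((i - N + 1 - 2 * j : ℤ) : R K) * cs K (2 : K)⁻¹) •
            Fop K s2 N (i + j + N - 1) v) ∧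
    (∀ j j' : ℤ, 1 ≤ j → 1 ≤ j' → ∀ v : SuperSpace K,
      Fop K s2 N j (Fop K s2 N j' v) + Fop K s2 N j' (Fop K s2 N j v)
        = (2 * hb K) • Hop K s2 N D (j + j' + N - 1) v) :=
  statement9_general K s2 hs2 N hN D

end
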